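/- arXiv:1505.02003 — 2 statements merged into one kernel-verified Lean document; each statement's English description precedes it below -/
import Mathlib

section
/- Let b ≥ 2 be an integer, let a = (a_j)_{j≥1} be a nondecreasing sequence of real weights, let 1 < p < 2 and put r = (p−1)/(2−p). Assume there exist constants A, C, c > 0 such that e(n, s, W_{s,a}) ≤ C·exp(A·s)·exp(−c·(log n)^p) for all s, n ∈ ℕ. Then liminf_{j→∞} a_j / j^r > 0. -/
open MeasureTheory Matrix Filter
open scoped ENNReal BigOperators Topology

noncomputable section

/-- The `b`-adic digit of `k : ℕ` at place `b^i` (i.e. the `(i+1)`-st digit). -/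
def natDigit (b k i : ℕ) : ℕ := k / b ^ i % b

/-- The `(i+1)`-st `b`-adic digit of a real number `x ∈ [0,1)`
(using the expansion in which infinitely many digits differ from `b-1`). -/
def realDigit (b : ℕ) (x : ℝ) (i : ℕ) : ℕ := (⌊x * (b : ℝ) ^ (i + 1)⌋ % (b : ℤ)).toNat

/-- The `k`-th one-dimensional `b`-adic Walsh function. -/
def wal1 (b k : ℕ) (x : ℝ) : ℂ :=
  Complex.exp (2 * Real.pi * Complex.I / (b : ℂ) *
    ((∑ i ∈ Finset.range k, natDigit b k i * realDigit b x i : ℕ) : ℂ))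

/-- The `k`-th `s`-dimensional `b`-adic Walsh function. -/
def wal (b : ℕ) {s : ℕ} (k : Fin s → ℕ) (x : Fin s → ℝ) : ℂ :=
  ∏ j, wal1 b (k j) (x j)

/-- The unit cube `[0,1)^s`. -/
def unitCube (s : ℕ) : Set (Fin s → ℝ) := Set.univ.pi fun _ => Set.Ico (0 : ℝ) 1

/-- The `k`-th Walsh coefficient of `f`. -/
def walshCoeff (b : ℕ) {s : ℕ} (f : (Fin s → ℝ) → ℝ) (k : Fin s → ℕ) : ℂ :=
  ∫ x in unitCube s, (f x : ℂ) * (starRingEnd ℂ) (wal b k x)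

/-- The generalized Dick weight `μ_a(k)`, one-dimensional case. -/
def dickWt (b : ℕ) (a : ℝ) (k : ℕ) : ℝ :=
  ∑ i ∈ Finset.range k, if natDigit b k i ≠ 0 then ((i : ℝ) + 1 + a) else 0

/-- The generalized Dick weight `μ_a(k)` for vectors. -/
def dickWtV (b : ℕ) {s : ℕ} (a : Fin s → ℝ) (k : Fin s → ℕ) : ℝ :=
  ∑ j, dickWt b (a j) (k j)

/-- The modified Dick weight `μ'_a(k)`, one-dimensional case. -/
def mdickWt (b : ℕ) (a : ℝ) (k : ℕ) : ℝ :=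
  ∑ i ∈ Finset.range k, if natDigit b k i ≠ 0 then max ((i : ℝ) + 1 + a) 1 else 0

/-- The modified Dick weight `μ'_a(k)` for vectors. -/
def mdickWtV (b : ℕ) {s : ℕ} (a : Fin s → ℝ) (k : Fin s → ℕ) : ℝ :=
  ∑ j, mdickWt b (a j) (k j)

/-- Digitwise subtraction modulo `b` of natural numbers. -/
def dsub (b k k' : ℕ) : ℕ :=
  ∑ i ∈ Finset.range (k + k' + 1), ((natDigit b k i + (b - natDigit b k' i)) % b) * b ^ i

/-- The integral of `f` over the unit cube. -/
def intBox (s : ℕ) (f : (Fin s → ℝ) → ℝ) : ℝ := ∫ x in unitCube s, f x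

/-- Membership in the Walsh space `W_{s,a}`: `f` equals its (convergent) Walsh series
and has finite norm. -/
def MemW (b : ℕ) {s : ℕ} (a : Fin s → ℝ) (f : (Fin s → ℝ) → ℝ) : Prop :=
  (∀ x ∈ unitCube s, HasSum (fun k : Fin s → ℕ => walshCoeff b f k * wal b k x) ((f x : ℂ))) ∧
  BddAbove (Set.range fun k : Fin s → ℕ => ‖walshCoeff b f k‖ * (b : ℝ) ^ dickWtV b a k)

/-- The norm of the Walsh space `W_{s,a}`. -/
def normW (b : ℕ) {s : ℕ} (a : Fin s → ℝ) (f : (Fin s → ℝ) → ℝ) : ℝ :=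
  ⨆ k : Fin s → ℕ, ‖walshCoeff b f k‖ * (b : ℝ) ^ dickWtV b a k

/-- Membership in the modified Walsh space `W'_{s,a}`. -/
def MemW' (b : ℕ) {s : ℕ} (a : Fin s → ℝ) (f : (Fin s → ℝ) → ℝ) : Prop :=
  (∀ x ∈ unitCube s, HasSum (fun k : Fin s → ℕ => walshCoeff b f k * wal b k x) ((f x : ℂ))) ∧
  BddAbove (Set.range fun k : Fin s → ℕ => ‖walshCoeff b f k‖ * (b : ℝ) ^ mdickWtV b a k)

/-- The norm of the modified Walsh space `W'_{s,a}`. -/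
def normW' (b : ℕ) {s : ℕ} (a : Fin s → ℝ) (f : (Fin s → ℝ) → ℝ) : ℝ :=
  ⨆ k : Fin s → ℕ, ‖walshCoeff b f k‖ * (b : ℝ) ^ mdickWtV b a k

/-- The worst-case error of the algorithm `A` over the unit ball of `(H, N)`. -/
def worstErr (s : ℕ) (H : Set ((Fin s → ℝ) → ℝ)) (N : ((Fin s → ℝ) → ℝ) → ℝ)
    (A : ((Fin s → ℝ) → ℝ) → ℝ) : ℝ≥0∞ :=
  ⨆ (f : (Fin s → ℝ) → ℝ) (_ : f ∈ H) (_ : N f ≤ 1), ENNReal.ofReal |intBox s f - A f|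

/-- The `n`-th minimal worst-case error over all algorithms using `n` function values
at points of the unit cube. -/
def minErr (n s : ℕ) (H : Set ((Fin s → ℝ) → ℝ)) (N : ((Fin s → ℝ) → ℝ) → ℝ) : ℝ≥0∞ :=
  ⨅ (t : Fin n → Fin s → ℝ) (_ : ∀ i, t i ∈ unitCube s) (φ : (Fin n → ℝ) → ℝ),
    worstErr s H N fun f => φ fun i => f (t i)

/-- Partial derivative in the `j`-th coordinate. -/
def pd {s : ℕ} (j : Fin s) (f : (Fin s → ℝ) → ℝ) : (Fin s → ℝ) → ℝ :=
  fun x => deriv (fun t => f (Function.update x j t)) (x j)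

/-- The mixed partial derivative `f^{(α)}`. -/
def mpd {s : ℕ} (α : Fin s → ℕ) (f : (Fin s → ℝ) → ℝ) : (Fin s → ℝ) → ℝ :=
  (List.finRange s).foldr (fun j g => (pd j)^[α j] g) f

/-- Membership in the space `S_{s,u}` of smooth functions. -/
def MemS {s : ℕ} (u : Fin s → ℝ) (f : (Fin s → ℝ) → ℝ) : Prop :=
  ContDiff ℝ (⊤ : ℕ∞) f ∧
  BddAbove (Set.range fun α : Fin s → ℕ =>
    (∫ x in unitCube s, |mpd α f x|) / ∏ j, u j ^ α j)

/-- The norm of the space `S_{s,u}`. -/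
def normS {s : ℕ} (u : Fin s → ℝ) (f : (Fin s → ℝ) → ℝ) : ℝ :=
  ⨆ α : Fin s → ℕ, (∫ x in unitCube s, |mpd α f x|) / ∏ j, u j ^ α j

/-- The column vector of the first `m` `b`-adic digits of `k`. -/
def trunc (b m k : ℕ) : Fin m → ZMod b := fun i => (natDigit b k (i : ℕ) : ZMod b)

/-- The `m`-th point of the digital net determined by generating matrices `G`. -/
def netPoint (b : ℕ) {s l d : ℕ} (G : Fin s → Matrix (Fin l) (Fin d) (ZMod b)) (m : ℕ) :
    Fin s → ℝ :=
  fun j => ∑ i : Fin l, (((G j).mulVec (trunc b d m)) i).val / (b : ℝ) ^ ((i : ℕ) + 1)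

/-- The dual net of the digital net determined by `G`. -/
def dualNet (b : ℕ) {s l d : ℕ} (G : Fin s → Matrix (Fin l) (Fin d) (ZMod b)) :
    Set (Fin s → ℕ) :=
  {k | ∑ j, (G j)ᵀ.mulVec (trunc b l (k j)) = 0}

/-- The QMC algorithm given by the digital net with generating matrices `G`. -/
def qmcNet (b : ℕ) {s l d : ℕ} (G : Fin s → Matrix (Fin l) (Fin d) (ZMod b))
    (f : (Fin s → ℝ) → ℝ) : ℝ :=
  ((b : ℝ) ^ d)⁻¹ * ∑ m ∈ Finset.range (b ^ d), f (netPoint b G m)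

/-- `n_j = #{i ∈ ℕ : i + a ≤ 1}` (with `i` ranging over positive integers). -/
def negCount (a : ℝ) : ℕ := Set.ncard {i : ℕ | 0 < i ∧ (i : ℝ) + a ≤ 1}

/-!
Fewer than `b ^ (m * s)` sample points miss one of the `b ^ (m * s)` congruent `b`-adic boxes of
side `b ^ (-m)`. The indicator of a missed box is a Walsh polynomial with frequencies `k j < b ^ m`
and coefficients of modulus `b ^ (-m * s)`, the volume of the box, while the Dick weight of such `k`
is at most `s * m * (m + α)` if all weights are at most `α`. Hence, for `n < b ^ (m * s)`,
  `b ^ (-s * m * (m + α)) ≤ e(n, s, W_{s,a})`.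
Comparing with the assumed upper bound at `n = b ^ (m * s - 1)`, taking logarithms and dividing by
`m * s` gives `(m * s) ^ (p - 1) ≲ 1 + m + max a_s 0`; now choose `m ≈ ε * s ^ r` with `ε` small.
-/

/-- The base `ω_b = exp(2πi / b)` of the Walsh functions. -/
def walshRoot (b : ℕ) : ℂ := Complex.exp (2 * Real.pi * Complex.I / (b : ℂ))

section Digits

variable {b : ℕ}

lemma natDigit_eq_zero_of_lt {k i : ℕ} (hk : k < b ^ i) : natDigit b k i = 0 := by
  rw [natDigit, Nat.div_eq_of_lt hk, Nat.zero_mod]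

lemma natDigit_eq_zero_of_lt_of_le (hb : 0 < b) {k m i : ℕ} (hk : k < b ^ m) (hi : m ≤ i) :
    natDigit b k i = 0 :=
  natDigit_eq_zero_of_lt (hk.trans_le (Nat.pow_le_pow_right hb hi))

lemma natDigit_add_pow_mul_of_lt (hb : 0 < b) (k q : ℕ) {m i : ℕ} (hi : i < m) :
    natDigit b (k + b ^ m * q) i = natDigit b k i := by
  obtain ⟨l, rfl⟩ := Nat.exists_eq_add_of_lt hi
  have hsplit : b ^ (i + l + 1) * q = b ^ i * (b * (b ^ l * q)) := by ring
  rw [natDigit, hsplit, Nat.add_mul_div_left _ _ (Nat.pow_pos hb), Nat.add_mul_mod_self_left,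
    natDigit]

lemma natDigit_add_pow_mul_add {k m : ℕ} (hk : k < b ^ m) (q i : ℕ) :
    natDigit b (k + b ^ m * q) (m + i) = natDigit b q i := by
  rw [natDigit, pow_add, ← Nat.div_div_eq_div_mul, Nat.add_mul_div_left _ _ (by lia),
    Nat.div_eq_of_lt hk, zero_add, natDigit]

lemma natCast_realDigit (hb : 0 < b) (x : ℝ) (i : ℕ) :
    (realDigit b x i : ℤ) = ⌊x * (b : ℝ) ^ (i + 1)⌋ % b :=
  Int.toNat_of_nonneg (Int.emod_nonneg _ (by lia))

lemma realDigit_lt (hb : 0 < b) (x : ℝ) (i : ℕ) : realDigit b x i < b := by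
  zify
  rw [natCast_realDigit hb]
  exact Int.emod_lt_of_pos _ (by lia)

lemma realDigit_pow_mul (x : ℝ) (m i : ℕ) :
    realDigit b ((b : ℝ) ^ m * x) i = realDigit b x (m + i) := by
  rw [realDigit, realDigit, mul_comm _ x, mul_assoc, ← pow_add, add_assoc]

lemma realDigit_add_one (x : ℝ) (i : ℕ) : realDigit b (x + 1) i = realDigit b x i := by
  have hshift : (x + 1) * (b : ℝ) ^ (i + 1) = x * (b : ℝ) ^ (i + 1) + ((b ^ i * b : ℤ) : ℝ) := by
    push_cast
    ring
  rw [realDigit, hshift, Int.floor_add_intCast, Int.add_mul_emod_self_right, realDigit]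

lemma realDigit_zero_add_inv (hb : 0 < b) (x : ℝ) :
    realDigit b (x + (b : ℝ)⁻¹) 0 = (realDigit b x 0 + 1) % b := by
  have hb' : (b : ℝ) ≠ 0 := by positivity
  have hshift : (x + (b : ℝ)⁻¹) * (b : ℝ) ^ (0 + 1) = x * (b : ℝ) ^ (0 + 1) + 1 := by
    rw [zero_add, pow_one, add_mul, inv_mul_cancel₀ hb']
  zify
  rw [natCast_realDigit hb, natCast_realDigit hb, hshift, Int.floor_add_one, Int.emod_add_emod]

lemma floor_mul_pow_eq_ediv (hb : 0 < b) (x : ℝ) (i l : ℕ) :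
    ⌊x * (b : ℝ) ^ i⌋ = ⌊x * (b : ℝ) ^ (i + l)⌋ / ((b ^ l : ℕ) : ℤ) := by
  have hb' : (b : ℝ) ^ l ≠ 0 := by positivity
  rw [← Int.floor_div_natCast, pow_add, Nat.cast_pow, ← mul_assoc, mul_div_cancel_right₀ _ hb']

lemma realDigit_congr (hb : 0 < b) {x y : ℝ} {m i : ℕ} (hi : i < m)
    (hxy : ⌊x * (b : ℝ) ^ m⌋ = ⌊y * (b : ℝ) ^ m⌋) : realDigit b x i = realDigit b y i := by
  obtain ⟨l, rfl⟩ := Nat.exists_eq_add_of_le (Nat.succ_le_of_lt hi)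
  rw [realDigit, realDigit, floor_mul_pow_eq_ediv hb x (i + 1) l,
    floor_mul_pow_eq_ediv hb y (i + 1) l, hxy]

lemma floor_mul_pow_succ_eq_iff (hb : 0 < b) (x y : ℝ) (m : ℕ) :
    ⌊x * (b : ℝ) ^ (m + 1)⌋ = ⌊y * (b : ℝ) ^ (m + 1)⌋ ↔
      ⌊x * (b : ℝ) ^ m⌋ = ⌊y * (b : ℝ) ^ m⌋ ∧ realDigit b x m = realDigit b y m := by
  rw [floor_mul_pow_eq_ediv hb x m 1, floor_mul_pow_eq_ediv hb y m 1, pow_one]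
  constructor
  · intro h
    exact ⟨by rw [h], realDigit_congr hb m.lt_succ_self h⟩
  · rintro ⟨hdiv, hdigit⟩
    zify at hdigit
    rw [natCast_realDigit hb, natCast_realDigit hb] at hdigit
    rw [← Int.emod_add_mul_ediv ⌊x * (b : ℝ) ^ (m + 1)⌋ b, hdiv, hdigit, Int.emod_add_mul_ediv]

end Digits

section UnivariateWalsh

variable {b : ℕ}

lemma walshRoot_isPrimitiveRoot (hb : 0 < b) : IsPrimitiveRoot (walshRoot b) b :=
  Complex.isPrimitiveRoot_exp b hb.ne'

lemma norm_walshRoot (hb : 0 < b) : ‖walshRoot b‖ = 1 :=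
  (walshRoot_isPrimitiveRoot hb).norm'_eq_one hb.ne'

lemma wal1_eq_walshRoot_pow (k : ℕ) (x : ℝ) :
    wal1 b k x = walshRoot b ^ ∑ i ∈ Finset.range k, natDigit b k i * realDigit b x i := by
  rw [wal1, walshRoot, ← Complex.exp_nat_mul, mul_comm]

lemma wal1_eq_walshRoot_pow_of_lt (hb : 2 ≤ b) {k m : ℕ} (hk : k < b ^ m) (x : ℝ) :
    wal1 b k x = walshRoot b ^ ∑ i ∈ Finset.range m, natDigit b k i * realDigit b x i := by
  have hzero : ∀ n, k < b ^ n → ∀ i ≥ n, natDigit b k i * realDigit b x i = 0 :=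
    fun n hn i hi => by rw [natDigit_eq_zero_of_lt_of_le (by lia) hn hi, zero_mul]
  rw [wal1_eq_walshRoot_pow,
    ← Finset.eventually_constant_sum (hzero k (Nat.lt_pow_self hb)) (le_max_left k m),
    Finset.eventually_constant_sum (hzero m hk) (le_max_right k m)]

@[simp]
lemma wal1_zero (x : ℝ) : wal1 b 0 x = 1 := by
  simp [wal1]

lemma norm_wal1 (hb : 0 < b) (k : ℕ) (x : ℝ) : ‖wal1 b k x‖ = 1 := by
  rw [wal1_eq_walshRoot_pow, norm_pow, norm_walshRoot hb, one_pow]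

lemma wal1_of_lt_base (hb : 2 ≤ b) {κ : ℕ} (hκ : κ < b) (x : ℝ) :
    wal1 b κ x = walshRoot b ^ (κ * realDigit b x 0) := by
  rw [wal1_eq_walshRoot_pow_of_lt hb (m := 1) (by simpa using hκ), Finset.sum_range_one, natDigit,
    pow_zero, Nat.div_one, Nat.mod_eq_of_lt hκ]

lemma wal1_add_pow_mul (hb : 2 ≤ b) {k m : ℕ} (hk : k < b ^ m) (q : ℕ) (x : ℝ) :
    wal1 b (k + b ^ m * q) x = wal1 b k x * wal1 b q ((b : ℝ) ^ m * x) := by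
  have hq : q < b ^ q := Nat.lt_pow_self hb
  have hlt : k + b ^ m * q < b ^ (m + q) := by
    rw [pow_add]
    nlinarith
  rw [wal1_eq_walshRoot_pow_of_lt hb hlt, wal1_eq_walshRoot_pow_of_lt hb hk,
    wal1_eq_walshRoot_pow q, ← pow_add, Finset.sum_range_add]
  congr 2
  · refine Finset.sum_congr rfl fun i hi => ?_
    rw [natDigit_add_pow_mul_of_lt (by lia) k q (Finset.mem_range.1 hi)]
  · refine Finset.sum_congr rfl fun i _ => ?_
    rw [natDigit_add_pow_mul_add hk, realDigit_pow_mul]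

lemma wal1_eq_wal1_mod_mul_wal1_div (hb : 2 ≤ b) (m k : ℕ) (x : ℝ) :
    wal1 b k x = wal1 b (k % b ^ m) x * wal1 b (k / b ^ m) ((b : ℝ) ^ m * x) := by
  rw [← wal1_add_pow_mul hb (Nat.mod_lt k (by positivity)), Nat.mod_add_div]

lemma wal1_periodic (k : ℕ) : Function.Periodic (wal1 b k) 1 := fun x => by
  simp only [wal1, realDigit_add_one]

lemma wal1_congr (hb : 2 ≤ b) {m k : ℕ} (hk : k < b ^ m) {x y : ℝ}
    (hxy : ⌊x * (b : ℝ) ^ m⌋ = ⌊y * (b : ℝ) ^ m⌋) : wal1 b k x = wal1 b k y := by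
  rw [wal1_eq_walshRoot_pow_of_lt hb hk, wal1_eq_walshRoot_pow_of_lt hb hk]
  congr 1
  refine Finset.sum_congr rfl fun i hi => ?_
  rw [realDigit_congr (by lia) (Finset.mem_range.1 hi) hxy]

lemma wal1_add_inv (hb : 2 ≤ b) (k : ℕ) (x : ℝ) :
    wal1 b k (x + (b : ℝ)⁻¹) = walshRoot b ^ k * wal1 b k x := by
  have hb0 : 0 < b := by lia
  have hb' : (b : ℝ) ≠ 0 := by positivity
  have hlow : k % b < b := Nat.mod_lt _ hb0
  have hfirst : walshRoot b ^ (k % b * ((realDigit b x 0 + 1) % b)) =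
      walshRoot b ^ k * walshRoot b ^ (k % b * realDigit b x 0) := by
    rw [← pow_add]
    refine pow_eq_pow_of_modEq ?_ (walshRoot_isPrimitiveRoot hb0).pow_eq_one
    calc k % b * ((realDigit b x 0 + 1) % b) ≡ k % b * (realDigit b x 0 + 1) [MOD b] :=
          (Nat.mod_modEq _ _).mul_left _
      _ = k % b + k % b * realDigit b x 0 := by ring
      _ ≡ k + k % b * realDigit b x 0 [MOD b] := (Nat.mod_modEq _ _).add_right _
  have hrest : wal1 b (k / b) ((b : ℝ) * (x + (b : ℝ)⁻¹)) = wal1 b (k / b) (b * x) := by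
    rw [mul_add, mul_inv_cancel₀ hb', wal1_periodic]
  have hsplit := wal1_eq_wal1_mod_mul_wal1_div hb 1 k
  simp only [pow_one] at hsplit
  rw [hsplit, hsplit x, hrest, wal1_of_lt_base hb hlow, wal1_of_lt_base hb hlow,
    realDigit_zero_add_inv hb0, hfirst, mul_assoc]

end UnivariateWalsh

section WalshIntegral

variable {b : ℕ}

lemma intervalIntegral_eq_zero_of_periodic_of_shift {f : ℝ → ℂ} {T h : ℝ} {ζ : ℂ}
    (hf : Function.Periodic f T) (hshift : ∀ x, f (x + h) = ζ * f x) (hζ : ζ ≠ 1) (t : ℝ) :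
    ∫ x in t..t + T, f x = 0 := by
  have hinv : ζ * ∫ x in t..t + T, f x = ∫ x in t..t + T, f x := by
    calc ζ * ∫ x in t..t + T, f x = ∫ x in t..t + T, f (x + h) := by
          simp only [hshift, intervalIntegral.integral_const_mul]
      _ = ∫ x in t + h..t + h + T, f x := by
          rw [intervalIntegral.integral_comp_add_right f, add_right_comm]
      _ = ∫ x in t..t + T, f x := hf.intervalIntegral_add_eq _ _
  have hfactor : (ζ - 1) * ∫ x in t..t + T, f x = 0 := by rw [sub_mul, hinv, one_mul, sub_self]
  exact (mul_eq_zero.1 hfactor).resolve_left (sub_ne_zero.2 hζ)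

/- If `k = b ^ v * u` with `b ∤ u`, a shift by `b ^ (-v - 1)` multiplies `wal1 b k` by
`walshRoot b ^ u ≠ 1`. -/
lemma integral_wal1 (hb : 2 ≤ b) (k : ℕ) (t : ℝ) :
    ∫ x in t..t + 1, wal1 b k x = if k = 0 then 1 else 0 := by
  split_ifs with hk
  · simp [hk]
  obtain ⟨v, u, hu, rfl⟩ := Nat.exists_eq_pow_mul_and_not_dvd hk b (by lia)
  have hb' : (b : ℝ) ^ v ≠ 0 := by positivity
  have hdilate : ∀ x, wal1 b (b ^ v * u) x = wal1 b u ((b : ℝ) ^ v * x) := fun x => by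
    simpa using wal1_add_pow_mul hb (k := 0) (m := v) (by positivity) u x
  refine intervalIntegral_eq_zero_of_periodic_of_shift (wal1_periodic _)
    (h := ((b : ℝ) ^ v)⁻¹ * (b : ℝ)⁻¹) (ζ := walshRoot b ^ u) (fun x => ?_) ?_ t
  · rw [hdilate, hdilate, mul_add, mul_inv_cancel_left₀ hb', wal1_add_inv hb]
  · rwa [Ne, (walshRoot_isPrimitiveRoot (by lia)).pow_eq_one_iff_dvd]

/-- The `c`-th interval of the partition of `[0, 1)` into `N` half-open intervals of equal length;
for `N = b ^ m` these are the `b`-adic elementary intervals of order `m`. -/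
def gridInterval (N c : ℕ) : Set ℝ := Set.Ico ((c : ℝ) / N) ((c + 1) / N)

lemma mem_gridInterval_iff_floor {N : ℕ} (hN : 0 < N) (c : ℕ) (x : ℝ) :
    x ∈ gridInterval N c ↔ ⌊x * N⌋ = (c : ℤ) := by
  have hN' : (0 : ℝ) < N := by positivity
  rw [gridInterval, Set.mem_Ico, div_le_iff₀ hN', lt_div_iff₀ hN', Int.floor_eq_iff,
    Int.cast_natCast]

lemma measurableSet_gridInterval (N c : ℕ) : MeasurableSet (gridInterval N c) :=
  measurableSet_Ico

lemma gridInterval_subset_Ico {N c : ℕ} (hc : c < N) : gridInterval N c ⊆ Set.Ico 0 1 := by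
  have hN : (0 : ℝ) < N := by exact_mod_cast (Nat.zero_le c).trans_lt hc
  refine Set.Ico_subset_Ico (by positivity) ?_
  rw [div_le_one hN]
  exact_mod_cast hc

lemma setIntegral_gridInterval_comp_mul {f : ℝ → ℂ} (hf : Function.Periodic f 1) {N : ℕ}
    (hN : 0 < N) (c : ℕ) :
    ∫ x in gridInterval N c, f (N * x) = (N : ℂ)⁻¹ * ∫ x in (0 : ℝ)..0 + 1, f x := by
  have hN' : (0 : ℝ) < N := by positivity
  have hle : (c : ℝ) / N ≤ (c + 1) / N := by gcongr; linarith
  rw [gridInterval, integral_Ico_eq_integral_Ioc, ← intervalIntegral.integral_of_le hle,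
    intervalIntegral.integral_comp_mul_left f hN'.ne', mul_div_cancel₀ _ hN'.ne',
    mul_div_cancel₀ _ hN'.ne', hf.intervalIntegral_add_eq c 0, Complex.real_smul,
    Complex.ofReal_inv, Complex.ofReal_natCast]

lemma setIntegral_wal1_gridInterval (hb : 2 ≤ b) (m k c : ℕ) :
    ∫ x in gridInterval (b ^ m) c, wal1 b k x =
      if k < b ^ m then ((b : ℂ) ^ m)⁻¹ * wal1 b k ((c : ℝ) / (b : ℝ) ^ m) else 0 := by
  have hpow : 0 < b ^ m := by positivity
  have hbm : (b : ℝ) ^ m ≠ 0 := by positivity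
  set ξ : ℝ := (c : ℝ) / (b : ℝ) ^ m
  have hsplit : ∀ x ∈ gridInterval (b ^ m) c,
      wal1 b k x = wal1 b (k % b ^ m) ξ * wal1 b (k / b ^ m) ((b ^ m : ℕ) * x) := fun x hx => by
    rw [mem_gridInterval_iff_floor hpow, Nat.cast_pow] at hx
    rw [wal1_eq_wal1_mod_mul_wal1_div hb m k x, Nat.cast_pow,
      wal1_congr hb (Nat.mod_lt k hpow) (y := ξ)]
    rw [hx, div_mul_cancel₀ _ hbm, Int.floor_natCast]
  rw [setIntegral_congr_fun (measurableSet_gridInterval _ _) hsplit, integral_const_mul,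
    setIntegral_gridInterval_comp_mul (wal1_periodic _) hpow, integral_wal1 hb]
  simp only [Nat.div_eq_zero_iff, hpow.ne', false_or]
  split_ifs with hk
  · rw [Nat.mod_eq_of_lt hk, Nat.cast_pow, mul_one, mul_comm]
  · simp

end WalshIntegral

section DirichletKernel

variable {b : ℕ}

lemma sum_range_mul_eq_sum_sum {M : Type*} [AddCommMonoid M] (f : ℕ → M) (m n : ℕ) :
    ∑ k ∈ Finset.range (m * n), f k =
      ∑ q ∈ Finset.range n, ∑ k ∈ Finset.range m, f (k + m * q) := by
  induction n with
  | zero => simp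
  | succ n ih =>
    rw [Nat.mul_succ, Finset.sum_range_add, ih, Finset.sum_range_succ]
    simp only [add_comm (m * n)]

lemma sum_wal1_mul_conj_of_lt_base (hb : 2 ≤ b) (x y : ℝ) :
    ∑ κ ∈ Finset.range b, wal1 b κ x * (starRingEnd ℂ) (wal1 b κ y) =
      if realDigit b x 0 = realDigit b y 0 then (b : ℂ) else 0 := by
  have hb0 : 0 < b := by lia
  have hζ := walshRoot_isPrimitiveRoot hb0
  have hζ0 : walshRoot b ≠ 0 := hζ.ne_zero hb0.ne'
  set u := realDigit b x 0
  set v := realDigit b y 0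
  set z : ℂ := walshRoot b ^ u / walshRoot b ^ v
  have hterm : ∀ κ ∈ Finset.range b, wal1 b κ x * (starRingEnd ℂ) (wal1 b κ y) = z ^ κ := by
    intro κ hκ
    rw [wal1_of_lt_base hb (Finset.mem_range.1 hκ), wal1_of_lt_base hb (Finset.mem_range.1 hκ),
      map_pow, ← Complex.inv_eq_conj (norm_walshRoot hb0), inv_pow, ← div_eq_mul_inv, mul_comm κ,
      mul_comm κ, pow_mul, pow_mul, ← div_pow]
  have hz : z = 1 ↔ u = v := by
    rw [div_eq_one_iff_eq (pow_ne_zero _ hζ0)]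
    exact ⟨hζ.pow_inj (realDigit_lt hb0 x 0) (realDigit_lt hb0 y 0), fun h => by rw [h]⟩
  have hzb : z ^ b = 1 := by
    rw [div_pow, pow_right_comm, pow_right_comm _ v, hζ.pow_eq_one, one_pow, one_pow, div_one]
  rw [Finset.sum_congr rfl hterm]
  split_ifs with huv
  · simp [hz.2 huv]
  · rw [geom_sum_eq (mt hz.1 huv), hzb, sub_self, zero_div]

lemma sum_wal1_mul_conj (hb : 2 ≤ b) {x y : ℝ} (hx : x ∈ Set.Ico (0 : ℝ) 1)
    (hy : y ∈ Set.Ico (0 : ℝ) 1) (m : ℕ) :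
    ∑ k ∈ Finset.range (b ^ m), wal1 b k x * (starRingEnd ℂ) (wal1 b k y) =
      if ⌊x * (b : ℝ) ^ m⌋ = ⌊y * (b : ℝ) ^ m⌋ then (b : ℂ) ^ m else 0 := by
  induction m with
  | zero => simp [Int.floor_eq_zero_iff.2 hx, Int.floor_eq_zero_iff.2 hy]
  | succ m ih =>
    set D : ℂ := ∑ k ∈ Finset.range (b ^ m), wal1 b k x * (starRingEnd ℂ) (wal1 b k y)
    have hblock : ∀ κ, ∑ k ∈ Finset.range (b ^ m),
        wal1 b (k + b ^ m * κ) x * (starRingEnd ℂ) (wal1 b (k + b ^ m * κ) y) =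
        D * (wal1 b κ ((b : ℝ) ^ m * x) * (starRingEnd ℂ) (wal1 b κ ((b : ℝ) ^ m * y))) := by
      intro κ
      rw [Finset.sum_mul]
      refine Finset.sum_congr rfl fun k hk => ?_
      rw [wal1_add_pow_mul hb (Finset.mem_range.1 hk), wal1_add_pow_mul hb (Finset.mem_range.1 hk),
        map_mul, mul_mul_mul_comm]
    simp only [pow_succ b m, sum_range_mul_eq_sum_sum, hblock]
    rw [← Finset.mul_sum, sum_wal1_mul_conj_of_lt_base hb, ih]
    simp only [realDigit_pow_mul, add_zero, floor_mul_pow_succ_eq_iff (by lia : 0 < b)]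
    split_ifs <;> simp_all [pow_succ]

end DirichletKernel

section ProductFunctions

variable {b s : ℕ}

/-- The `k`-th Walsh coefficient of a function of one variable, so that the Walsh coefficients of a
product function are products of these. -/
def wal1Coeff (b : ℕ) (g : ℝ → ℝ) (k : ℕ) : ℂ :=
  ∫ y in Set.Ico (0 : ℝ) 1, (g y : ℂ) * (starRingEnd ℂ) (wal1 b k y)

lemma walshCoeff_prod (g : Fin s → ℝ → ℝ) (k : Fin s → ℕ) :
    walshCoeff b (fun x => ∏ j, g j (x j)) k = ∏ j, wal1Coeff b (g j) (k j) := by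
  simp only [walshCoeff, wal, unitCube, Complex.ofReal_prod, map_prod, ← Finset.prod_mul_distrib]
  rw [volume_pi, Measure.restrict_pi_pi]
  exact integral_fintype_prod_eq_prod fun j y => (g j y : ℂ) * (starRingEnd ℂ) (wal1 b (k j) y)

lemma ofReal_intBox (f : (Fin s → ℝ) → ℝ) : (intBox s f : ℂ) = walshCoeff b f 0 := by
  simp [walshCoeff, wal, intBox, integral_complex_ofReal]

lemma hasSum_walsh_prod {g : Fin s → ℝ → ℝ} {N : ℕ}
    (hvanish : ∀ j, ∀ k ≥ N, wal1Coeff b (g j) k = 0) {x : Fin s → ℝ}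
    (hsum : ∀ j, ∑ k ∈ Finset.range N, wal1Coeff b (g j) k * wal1 b k (x j) = (g j (x j) : ℂ)) :
    HasSum (fun k => walshCoeff b (fun x => ∏ j, g j (x j)) k * wal b k x)
      ((∏ j, g j (x j) : ℝ) : ℂ) := by
  simp only [walshCoeff_prod, wal, ← Finset.prod_mul_distrib, Complex.ofReal_prod, ← hsum,
    Finset.prod_univ_sum]
  refine hasSum_sum_of_ne_finset_zero fun k hk => ?_
  simp only [Fintype.mem_piFinset, Finset.mem_range, not_forall, not_lt] at hk
  obtain ⟨j, hj⟩ := hk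
  exact Finset.prod_eq_zero (Finset.mem_univ j) (by rw [hvanish j _ hj, zero_mul])

end ProductFunctions

section GridBoxes

variable {b : ℕ}

lemma wal1Coeff_indicator_gridInterval (hb : 2 ≤ b) {m c : ℕ} (hc : c < b ^ m) (k : ℕ) :
    wal1Coeff b ((gridInterval (b ^ m) c).indicator 1) k =
      if k < b ^ m then ((b : ℂ) ^ m)⁻¹ * (starRingEnd ℂ) (wal1 b k ((c : ℝ) / (b : ℝ) ^ m))
      else 0 := by
  have hindicator : ∀ y, (((gridInterval (b ^ m) c).indicator 1 y : ℝ) : ℂ) *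
      (starRingEnd ℂ) (wal1 b k y) =
      (gridInterval (b ^ m) c).indicator (fun y => (starRingEnd ℂ) (wal1 b k y)) y := fun y => by
    by_cases hy : y ∈ gridInterval (b ^ m) c <;> simp [hy]
  simp only [wal1Coeff, hindicator]
  rw [setIntegral_indicator (measurableSet_gridInterval _ _),
    Set.inter_eq_right.2 (gridInterval_subset_Ico hc), integral_conj,
    setIntegral_wal1_gridInterval hb]
  split_ifs <;> simp

lemma sum_wal1Coeff_indicator_gridInterval (hb : 2 ≤ b) {m c : ℕ} (hc : c < b ^ m) {x : ℝ}
    (hx : x ∈ Set.Ico (0 : ℝ) 1) :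
    ∑ k ∈ Finset.range (b ^ m),
        wal1Coeff b ((gridInterval (b ^ m) c).indicator 1) k * wal1 b k x =
      (((gridInterval (b ^ m) c).indicator 1 x : ℝ) : ℂ) := by
  have hpow : 0 < b ^ m := by positivity
  have hbm : (b : ℝ) ^ m ≠ 0 := by positivity
  have hbm' : (b : ℂ) ^ m ≠ 0 := by exact_mod_cast hpow.ne'
  set ξ : ℝ := (c : ℝ) / (b : ℝ) ^ m
  have hξ : ξ * (b : ℝ) ^ m = c := div_mul_cancel₀ _ hbm
  have hξmem : ξ ∈ Set.Ico (0 : ℝ) 1 := by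
    refine gridInterval_subset_Ico hc ((mem_gridInterval_iff_floor hpow c ξ).2 ?_)
    rw [Nat.cast_pow, hξ, Int.floor_natCast]
  have hterm : ∀ k ∈ Finset.range (b ^ m),
      wal1Coeff b ((gridInterval (b ^ m) c).indicator 1) k * wal1 b k x =
        ((b : ℂ) ^ m)⁻¹ * (wal1 b k x * (starRingEnd ℂ) (wal1 b k ξ)) := fun k hk => by
    rw [wal1Coeff_indicator_gridInterval hb hc, if_pos (Finset.mem_range.1 hk)]
    ring
  have hmem := mem_gridInterval_iff_floor hpow c x
  rw [Nat.cast_pow] at hmem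
  rw [Finset.sum_congr rfl hterm, ← Finset.mul_sum, sum_wal1_mul_conj hb hx hξmem, hξ,
    Int.floor_natCast]
  by_cases hxc : x ∈ gridInterval (b ^ m) c
  · simp [hxc, hmem.1 hxc, hbm']
  · simp [hxc, mt hmem.2 hxc]

/-- The indicator function of the product of the intervals `gridInterval N (c j)`, which serves as a
fooling function for algorithms that never sample inside this box. -/
def gridBoxIndicator (N : ℕ) {s : ℕ} (c : Fin s → ℕ) (x : Fin s → ℝ) : ℝ :=
  ∏ j, (gridInterval N (c j)).indicator 1 (x j)

variable {s m : ℕ} {c : Fin s → ℕ}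

lemma hasSum_walsh_gridBoxIndicator (hb : 2 ≤ b) (hc : ∀ j, c j < b ^ m) {x : Fin s → ℝ}
    (hx : x ∈ unitCube s) :
    HasSum (fun k => walshCoeff b (gridBoxIndicator (b ^ m) c) k * wal b k x)
      (gridBoxIndicator (b ^ m) c x : ℂ) := by
  refine hasSum_walsh_prod (N := b ^ m) (fun j k hk => ?_) fun j => ?_
  · rw [wal1Coeff_indicator_gridInterval hb (hc j), if_neg hk.not_gt]
  · exact sum_wal1Coeff_indicator_gridInterval hb (hc j) (hx j (Set.mem_univ j))

lemma intBox_gridBoxIndicator (hb : 2 ≤ b) (hc : ∀ j, c j < b ^ m) :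
    intBox s (gridBoxIndicator (b ^ m) c) = (((b : ℝ) ^ m)⁻¹) ^ s := by
  have hpow : 0 < b ^ m := by positivity
  apply Complex.ofReal_injective
  rw [ofReal_intBox (b := b)]
  unfold gridBoxIndicator
  simp [walshCoeff_prod, wal1Coeff_indicator_gridInterval hb (hc _), hpow]

lemma dickWt_le_of_lt_pow (hb : 0 < b) {k : ℕ} (hk : k < b ^ m) {a α : ℝ} (ha : a ≤ α)
    (hα : 0 ≤ m + α) : dickWt b a k ≤ m * (m + α) := by
  have hterm : ∀ i ∈ Finset.range k, (if natDigit b k i ≠ 0 then (i : ℝ) + 1 + a else 0) ≤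
      if i < m then (m : ℝ) + α else 0 := fun i _ => by
    by_cases hi : i < m
    · have hi' : (i : ℝ) + 1 ≤ m := by exact_mod_cast hi
      rw [if_pos hi]
      split_ifs <;> linarith
    · simp [hi, natDigit_eq_zero_of_lt_of_le hb hk (not_lt.1 hi)]
  calc dickWt b a k ≤ ∑ i ∈ Finset.range k, if i < m then (m : ℝ) + α else 0 :=
        Finset.sum_le_sum hterm
    _ = ∑ i ∈ Finset.range k with i < m, ((m : ℝ) + α) := (Finset.sum_filter _ _).symm
    _ ≤ ∑ _i ∈ Finset.range m, ((m : ℝ) + α) :=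
        Finset.sum_le_sum_of_subset_of_nonneg (fun i hi => by simp_all) fun _ _ _ => hα
    _ = m * (m + α) := by rw [Finset.sum_const, Finset.card_range, nsmul_eq_mul]

lemma dickWtV_le_of_lt_pow (hb : 0 < b) {k : Fin s → ℕ} (hk : ∀ j, k j < b ^ m) {a : Fin s → ℝ}
    {α : ℝ} (ha : ∀ j, a j ≤ α) (hα : 0 ≤ m + α) : dickWtV b a k ≤ s * (m * (m + α)) :=
  calc dickWtV b a k ≤ ∑ _j : Fin s, (m : ℝ) * (m + α) :=
        Finset.sum_le_sum fun j _ => dickWt_le_of_lt_pow hb (hk j) (ha j) hα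
    _ = s * (m * (m + α)) := by simp

lemma norm_walshCoeff_gridBoxIndicator (hb : 2 ≤ b) (hc : ∀ j, c j < b ^ m) (k : Fin s → ℕ) :
    ‖walshCoeff b (gridBoxIndicator (b ^ m) c) k‖ =
      if ∀ j, k j < b ^ m then (((b : ℝ) ^ m)⁻¹) ^ s else 0 := by
  unfold gridBoxIndicator
  rw [walshCoeff_prod, norm_prod]
  split_ifs with hk
  · simp [wal1Coeff_indicator_gridInterval hb (hc _), hk, norm_wal1 (by lia : 0 < b)]
  · obtain ⟨j, hj⟩ := not_forall.1 hk
    refine Finset.prod_eq_zero (Finset.mem_univ j) ?_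
    rw [wal1Coeff_indicator_gridInterval hb (hc j), if_neg hj, norm_zero]

lemma norm_walshCoeff_gridBoxIndicator_mul_rpow_le (hb : 2 ≤ b) (hc : ∀ j, c j < b ^ m)
    {a : Fin s → ℝ} {α : ℝ} (ha : ∀ j, a j ≤ α) (hα : 0 ≤ m + α) (k : Fin s → ℕ) :
    ‖walshCoeff b (gridBoxIndicator (b ^ m) c) k‖ * (b : ℝ) ^ dickWtV b a k ≤
      (((b : ℝ) ^ m)⁻¹) ^ s * (b : ℝ) ^ (s * (m * (m + α))) := by
  have hb1 : (1 : ℝ) ≤ b := by exact_mod_cast (by lia : 1 ≤ b)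
  rw [norm_walshCoeff_gridBoxIndicator hb hc]
  split_ifs with hk
  · gcongr
    exact dickWtV_le_of_lt_pow (by lia) hk ha hα
  · rw [zero_mul]
    positivity

lemma exists_gridBoxIndicator_eq_zero {N n : ℕ} (hn : n < N ^ s) (t : Fin n → Fin s → ℝ) :
    ∃ c : Fin s → ℕ, (∀ j, c j < N) ∧ ∀ i, gridBoxIndicator N c (t i) = 0 := by
  by_contra! hhit
  choose hit hhit using fun c : Fin s → Fin N => hhit (fun j => c j) fun j => (c j).isLt
  have hfloor : ∀ c j, ⌊t (hit c) j * N⌋ = ((c j : ℕ) : ℤ) := fun c j => by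
    rw [← mem_gridInterval_iff_floor (c j).pos]
    exact Set.mem_of_indicator_ne_zero (Finset.prod_ne_zero_iff.1 (hhit c) j (Finset.mem_univ j))
  have hinj : Function.Injective hit := fun c c' h => by
    ext j
    exact_mod_cast (hfloor c j).symm.trans (h ▸ hfloor c' j)
  have hcard := Fintype.card_le_of_injective hit hinj
  rw [Fintype.card_fun, Fintype.card_fin, Fintype.card_fin, Fintype.card_fin] at hcard
  exact hn.not_ge hcard

end GridBoxes

section WorstCaseError

variable {b s n : ℕ}

lemma walshCoeff_const_mul (lam : ℝ) (f : (Fin s → ℝ) → ℝ) (k : Fin s → ℕ) :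
    walshCoeff b (fun x => lam * f x) k = lam * walshCoeff b f k := by
  simp only [walshCoeff, Complex.ofReal_mul, mul_assoc, integral_const_mul]

lemma MemW.const_mul {a : Fin s → ℝ} {f : (Fin s → ℝ) → ℝ} (hf : MemW b a f) (lam : ℝ) :
    MemW b a fun x => lam * f x := by
  obtain ⟨hseries, hbdd⟩ := hf
  simp only [MemW, walshCoeff_const_mul, norm_mul, mul_assoc, Complex.ofReal_mul]
  refine ⟨fun x hx => (hseries x hx).mul_left _, ?_⟩
  obtain ⟨M, hM⟩ := hbdd
  refine ⟨‖(lam : ℂ)‖ * M, ?_⟩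
  rintro _ ⟨k, rfl⟩
  exact mul_le_mul_of_nonneg_left (hM ⟨k, rfl⟩) (norm_nonneg _)

lemma normW_const_mul (a : Fin s → ℝ) (lam : ℝ) (f : (Fin s → ℝ) → ℝ) :
    normW b a (fun x => lam * f x) = |lam| * normW b a f := by
  simp only [normW, walshCoeff_const_mul, norm_mul, mul_assoc, Complex.norm_real, Real.norm_eq_abs,
    Real.mul_iSup_of_nonneg (abs_nonneg lam)]

lemma intBox_const_mul (lam : ℝ) (f : (Fin s → ℝ) → ℝ) :
    intBox s (fun x => lam * f x) = lam * intBox s f :=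
  integral_const_mul _ _

lemma ofReal_abs_le_worstErr {H : Set ((Fin s → ℝ) → ℝ)} {N : ((Fin s → ℝ) → ℝ) → ℝ}
    {f : (Fin s → ℝ) → ℝ} (hf : f ∈ H) (hN : N f ≤ 1) (A : ((Fin s → ℝ) → ℝ) → ℝ) :
    ENNReal.ofReal |intBox s f - A f| ≤ worstErr s H N A :=
  le_iSup_of_le f (le_iSup_of_le hf (le_iSup_of_le hN le_rfl))

/- On the data `0` the algorithm returns the same value for `f` and `-f`, hence errs by at least
`∫ f` on one of them. -/
lemma ofReal_le_minErr_of_fooling {H : Set ((Fin s → ℝ) → ℝ)} {N : ((Fin s → ℝ) → ℝ) → ℝ} {ε : ℝ}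
    (hfool : ∀ t : Fin n → Fin s → ℝ, ∃ f, (f ∈ H ∧ N f ≤ 1) ∧
      ((fun x => -1 * f x) ∈ H ∧ N (fun x => -1 * f x) ≤ 1) ∧ (∀ i, f (t i) = 0) ∧ ε ≤ intBox s f) :
    ENNReal.ofReal ε ≤ minErr n s H N := by
  refine le_iInf fun t => le_iInf fun _ => le_iInf fun φ => ?_
  obtain ⟨f, ⟨hf, hfN⟩, ⟨hg, hgN⟩, hzero, hε⟩ := hfool t
  have hpos := ofReal_abs_le_worstErr hf hfN fun f => φ fun i => f (t i)
  have hneg := ofReal_abs_le_worstErr hg hgN fun f => φ fun i => f (t i)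
  simp only [intBox_const_mul, hzero, mul_zero] at hpos hneg
  rcases le_total (φ fun _ => 0) 0 with hφ | hφ
  · refine (ENNReal.ofReal_le_ofReal ?_).trans hpos
    exact le_trans (by linarith) (le_abs_self _)
  · refine (ENNReal.ofReal_le_ofReal ?_).trans hneg
    exact le_trans (by linarith) (neg_le_abs _)

lemma ofReal_div_le_minErr_of_fooling {a : Fin s → ℝ} {I M : ℝ} (hM : 0 < M)
    (hfool : ∀ t : Fin n → Fin s → ℝ, ∃ f, MemW b a f ∧ normW b a f ≤ M ∧ (∀ i, f (t i) = 0) ∧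
      I ≤ intBox s f) :
    ENNReal.ofReal (I / M) ≤ minErr n s {f | MemW b a f} (normW b a) := by
  refine ofReal_le_minErr_of_fooling fun t => ?_
  obtain ⟨f, hf, hfM, hzero, hI⟩ := hfool t
  have hnorm : normW b a (fun x => M⁻¹ * f x) ≤ 1 := by
    rw [normW_const_mul, abs_of_pos (inv_pos.2 hM), inv_mul_le_one₀ hM]
    exact hfM
  refine ⟨fun x => M⁻¹ * f x, ⟨hf.const_mul _, hnorm⟩, ⟨(hf.const_mul _).const_mul _, ?_⟩, ?_, ?_⟩
  · rw [normW_const_mul, abs_neg, abs_one, one_mul]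
    exact hnorm
  · simp [hzero]
  · rw [intBox_const_mul, div_eq_inv_mul]
    gcongr

lemma ofReal_rpow_neg_le_minErr (hb : 2 ≤ b) {m : ℕ} (hn : n < b ^ (m * s)) {a : Fin s → ℝ} {α : ℝ}
    (ha : ∀ j, a j ≤ α) (hα : 0 ≤ m + α) :
    ENNReal.ofReal ((b : ℝ) ^ (-(s * (m * (m + α))))) ≤
      minErr n s {f | MemW b a f} (normW b a) := by
  have hb0 : (0 : ℝ) < b := by positivity
  set V : ℝ := (((b : ℝ) ^ m)⁻¹) ^ s
  have hV : 0 < V := by positivity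
  have hratio : (b : ℝ) ^ (-(s * (m * (m + α)))) = V / (V * (b : ℝ) ^ (s * (m * (m + α)))) := by
    rw [Real.rpow_neg hb0.le, div_mul_cancel_left₀ hV.ne']
  rw [hratio]
  refine ofReal_div_le_minErr_of_fooling (by positivity) fun t => ?_
  obtain ⟨c, hc, hzero⟩ := exists_gridBoxIndicator_eq_zero (by rwa [← pow_mul]) t
  have hcoeff := norm_walshCoeff_gridBoxIndicator_mul_rpow_le hb hc ha hα
  exact ⟨gridBoxIndicator (b ^ m) c,
    ⟨fun x hx => hasSum_walsh_gridBoxIndicator hb hc hx, _, Set.forall_mem_range.2 hcoeff⟩,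
    ciSup_le hcoeff, hzero, (intBox_gridBoxIndicator hb hc).ge⟩

end WorstCaseError

section Asymptotics

lemma exists_pos_mul_rpow_eq {c d q : ℝ} (hc : 0 < c) (hd : 0 < d) (hq : q ≠ 1) :
    ∃ ε > 0, c * ε ^ q = d * ε := by
  have hq' : 1 - q ≠ 0 := sub_ne_zero.2 hq.symm
  refine ⟨(c / d) ^ (1 - q)⁻¹, by positivity, ?_⟩
  set ε := (c / d) ^ (1 - q)⁻¹
  have hε0 : 0 < ε := by positivity
  have hroot : ε ^ (1 - q) = c / d := Real.rpow_inv_rpow (by positivity) hq'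
  rw [Real.rpow_sub hε0, Real.rpow_one, div_eq_div_iff (by positivity) hd.ne'] at hroot
  linarith

/- The exponent `r = q / (1 - q)` solves `q * (r + 1) = r`: with `m ≈ ε * (j + 1) ^ r` the terms
`(m * (j + 1)) ^ q` and `m` have the same order, and a small `ε` makes the former dominate. -/
lemma exists_eventually_mul_rpow_le {L K c q : ℝ} (hL : 0 < L) (hc : 0 < c) (hq0 : 0 < q)
    (hq1 : q < 1) {β : ℕ → ℝ}
    (h : ∀ j m : ℕ, 1 ≤ j → 1 ≤ m → c * ((m : ℝ) * (j + 1)) ^ q ≤ K + L * (m + β j)) :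
    ∃ c' > 0, ∀ᶠ j : ℕ in atTop, c' * ((j : ℝ) + 1) ^ (q / (1 - q)) ≤ β j := by
  set r := q / (1 - q)
  have hr0 : 0 < r := div_pos hq0 (by linarith)
  have hr : (r + 1) * q = r := by
    have : 1 - q ≠ 0 := by linarith
    simp only [r]
    field_simp
    ring
  obtain ⟨ε, hε, hεq⟩ := exists_pos_mul_rpow_eq hc (mul_pos two_pos hL) hq1.ne
  have htend : Tendsto (fun j : ℕ => ((j : ℝ) + 1) ^ r) atTop atTop :=
    (tendsto_rpow_atTop hr0).comp (tendsto_atTop_add_const_right _ 1 tendsto_natCast_atTop_atTop)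
  refine ⟨ε / 2, by positivity, ?_⟩
  filter_upwards [htend.eventually_ge_atTop ((K + L) / (L * (ε / 2))), eventually_ge_atTop 1]
    with j hlarge hj
  set S : ℝ := (j : ℝ) + 1
  have hS : 0 < S := by positivity
  set m : ℕ := ⌈ε * S ^ r⌉₊
  have hlower : ε * S ^ r ≤ m := Nat.le_ceil _
  have hupper : (m : ℝ) < ε * S ^ r + 1 := Nat.ceil_lt_add_one (by positivity)
  have hpow : ε ^ q * S ^ r ≤ (m * S) ^ q :=
    calc ε ^ q * S ^ r = (ε * S ^ r * S) ^ q := by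
          rw [mul_assoc, Real.mul_rpow hε.le (by positivity), ← Real.rpow_add_one hS.ne',
            ← Real.rpow_mul hS.le, hr]
      _ ≤ (m * S) ^ q := by gcongr
  have hmain : L * (2 * (ε * S ^ r)) ≤ K + L * (ε * S ^ r + 1 + β j) :=
    calc L * (2 * (ε * S ^ r)) = c * (ε ^ q * S ^ r) := by linear_combination -(S ^ r) * hεq
      _ ≤ c * (m * S) ^ q := by gcongr
      _ ≤ K + L * (m + β j) := h j m hj (Nat.one_le_ceil_iff.2 (by positivity))
      _ ≤ K + L * (ε * S ^ r + 1 + β j) := by gcongr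
  rw [div_le_iff₀ (by positivity)] at hlarge
  refine le_of_mul_le_mul_left ?_ hL
  linarith

lemma half_log_mul_le_log_pow_pred {b N : ℕ} (hN : 2 ≤ N) :
    Real.log b / 2 * N ≤ Real.log ((b ^ (N - 1) : ℕ) : ℝ) := by
  have hN' : (2 : ℝ) ≤ N := by exact_mod_cast hN
  rw [Nat.cast_pow, Real.log_pow, Nat.cast_sub (by omega), Nat.cast_one]
  nlinarith [Real.log_natCast_nonneg b]

lemma half_log_rpow_mul_rpow_le_log_rpow {b N : ℕ} (hN : 2 ≤ N) {p : ℝ} (hp : 0 ≤ p) :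
    (Real.log b / 2) ^ p * (N : ℝ) ^ (p - 1) * N ≤ Real.log ((b ^ (N - 1) : ℕ) : ℝ) ^ p := by
  have hN0 : (N : ℝ) ≠ 0 := by exact_mod_cast (by omega : N ≠ 0)
  have hL : 0 ≤ Real.log b / 2 := div_nonneg (Real.log_natCast_nonneg b) two_pos.le
  calc (Real.log b / 2) ^ p * (N : ℝ) ^ (p - 1) * N = (Real.log b / 2 * N) ^ p := by
        rw [Real.mul_rpow hL N.cast_nonneg, mul_assoc, ← Real.rpow_add_one hN0, sub_add_cancel]
    _ ≤ Real.log ((b ^ (N - 1) : ℕ) : ℝ) ^ p := by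
        gcongr
        exact half_log_mul_le_log_pow_pred hN

lemma mul_rpow_le_of_rpow_neg_le {b s m : ℕ} (hb : 0 < b) (hs : 2 ≤ s) (hm : 1 ≤ m)
    {A C c p α : ℝ} (hA : 0 ≤ A) (hC : 0 < C) (hc : 0 ≤ c) (hp : 0 ≤ p)
    (h : (b : ℝ) ^ (-(s * (m * (m + α)))) ≤
      C * Real.exp (A * s) * Real.exp (-c * Real.log ((b ^ (m * s - 1) : ℕ) : ℝ) ^ p)) :
    c * (Real.log b / 2) ^ p * ((m : ℝ) * s) ^ (p - 1) ≤
      |Real.log C| + A + Real.log b * (m + α) := by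
  have hm' : (1 : ℝ) ≤ m := by exact_mod_cast hm
  have hs' : (2 : ℝ) ≤ s := by exact_mod_cast hs
  have hms : (1 : ℝ) ≤ m * s := by nlinarith
  have hlog := Real.log_le_log (by positivity) h
  rw [Real.log_rpow (by positivity), Real.log_mul (by positivity) (by positivity),
    Real.log_mul hC.ne' (by positivity), Real.log_exp, Real.log_exp] at hlog
  have hpow := half_log_rpow_mul_rpow_le_log_rpow (b := b) (by nlinarith : 2 ≤ m * s) hp
  rw [Nat.cast_mul] at hpow
  have hlogC : Real.log C ≤ |Real.log C| * (m * s) :=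
    (le_abs_self _).trans (le_mul_of_one_le_right (abs_nonneg _) hms)
  have hAs : A * s ≤ A * (m * s) := by
    gcongr
    exact le_mul_of_one_le_left (by positivity) hm'
  refine le_of_mul_le_mul_right ?_ (zero_lt_one.trans_le hms)
  linarith [mul_le_mul_of_nonneg_left hpow hc]

end Asymptotics

/-- if `e(n,s,W_{s,a}) ≤ C·exp(A·s)·exp(-c·(log n)^p)` for all `s, n` with
`1 < p < 2`, then `liminf_j a_j / j^r > 0` where `r = (p-1)/(2-p)` (expressed as:
eventually `a_j ≥ c'·j^r` for some `c' > 0`; the sequence `a` is indexed from `0`). -/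
theorem statement8 (b : ℕ) (hb : 2 ≤ b) (a : ℕ → ℝ) (ha : Monotone a)
    (p : ℝ) (hp1 : 1 < p) (hp2 : p < 2)
    (hbound : ∃ A C c : ℝ, 0 < A ∧ 0 < C ∧ 0 < c ∧
      ∀ s n : ℕ, 0 < s → 0 < n →
        minErr n s {f | MemW b (fun j : Fin s => a j) f} (normW b (fun j : Fin s => a j)) ≤
          ENNReal.ofReal (C * Real.exp (A * s) * Real.exp (-c * (Real.log n) ^ p))) :
    ∃ c' : ℝ, 0 < c' ∧ ∀ᶠ j : ℕ in Filter.atTop,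
      c' * ((j : ℝ) + 1) ^ ((p - 1) / (2 - p)) ≤ a j := by
  obtain ⟨A, C, c, hA, hC, hc, hbound⟩ := hbound
  have hlogb : 0 < Real.log b := Real.log_pos (by exact_mod_cast hb)
  have hgrowth : ∀ j m : ℕ, 1 ≤ j → 1 ≤ m → c * (Real.log b / 2) ^ p * ((m : ℝ) * (j + 1)) ^ (p - 1)
      ≤ |Real.log C| + A + Real.log b * (m + max (a j) 0) := by
    intro j m hj hm
    have hn : b ^ (m * (j + 1) - 1) < b ^ (m * (j + 1)) :=
      Nat.pow_lt_pow_right hb (Nat.sub_one_lt (by positivity))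
    have hlower := (ofReal_rpow_neg_le_minErr hb hn (a := fun i => a i) (α := max (a j) 0)
      (fun i => (ha (Nat.lt_succ_iff.1 i.2)).trans (le_max_left _ _)) (by positivity)).trans
      (hbound (j + 1) _ j.succ_pos (by positivity))
    rw [ENNReal.ofReal_le_ofReal_iff (by positivity)] at hlower
    exact_mod_cast mul_rpow_le_of_rpow_neg_le (by omega) (by omega) hm hA.le hC hc.le
      (by linarith) hlower
  obtain ⟨c', hc', hβ⟩ := exists_eventually_mul_rpow_le hlogb (by positivity) (sub_pos.2 hp1)
    (by linarith) hgrowth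
  rw [show 1 - (p - 1) = 2 - p by ring] at hβ
  refine ⟨c', hc', hβ.mono fun j hj => (le_max_iff.1 hj).resolve_right (not_le.2 ?_)⟩
  positivity

end
end

section
/- Let b ≥ 2 be an integer, s ∈ ℕ, and let a = (a_j)_{j≥1} be a nondecreasing sequence of real weights. Set n_j = #{i ∈ ℕ : i + a_j ≤ 1} and S = (b−1)·∑_{j=1}^s n_j. Then for all M ≥ 0: V_{s,a}(M) ≤ exp( S + 2·√((b−1)·s·M) ). -/
open MeasureTheory Matrix Filter
open scoped ENNReal BigOperators Topology

noncomputable section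

/-!
Chernoff's method: for every `l > 0` each `k` with `μ'_a(k) ≤ M` has
`exp (-l * μ'_a(k)) ≥ exp (-l * M)`, so `V_{s,a}(M) ≤ exp (l * M) * ∑ₖ exp (-l * μ'_a(k))`.
As `μ'_a` is additive over coordinates and over digits, the generating function factors as a
product of `1 + (b - 1) * exp (-l * wᵢ)` over the places `i` of each coordinate, `wᵢ` being the
weight of a nonzero digit. Since `1 + x ≤ exp x`, it remains to bound `∑ᵢ exp (-l * wᵢ)`: the first
`n_j` places contribute at most `1` each, and the remaining ones at most a geometric series with
sum `1 / (exp l - 1) ≤ 1 / l`. Hence `V_{s,a}(M) ≤ exp (S + l * M + (b - 1) * s / l)`, and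
optimizing over `l` gives the square root.
-/

lemma finite_and_ncard_le_of_forall_finset_card_le {α : Type*} {A : Set α} {c : ℝ}
    (h : ∀ T : Finset α, ↑T ⊆ A → (T.card : ℝ) ≤ c) : A.Finite ∧ (A.ncard : ℝ) ≤ c := by
  have hA : A.Finite := by
    by_contra hA
    obtain ⟨n, hn⟩ := exists_nat_gt c
    obtain ⟨T, hTA, rfl⟩ := Set.Infinite.exists_subset_card_eq hA n
    exact (h T hTA).not_gt hn
  refine ⟨hA, ?_⟩
  rw [Set.ncard_eq_toFinset_card A hA]
  exact h hA.toFinset hA.coe_toFinset.subset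

lemma card_le_exp_mul_sum_exp_neg {α : Type*} {T : Finset α} {μ : α → ℝ} {l M : ℝ} (hl : 0 ≤ l)
    (hT : ∀ k ∈ T, μ k ≤ M) :
    (T.card : ℝ) ≤ Real.exp (l * M) * ∑ k ∈ T, Real.exp (-l * μ k) := by
  rw [Finset.mul_sum, ← nsmul_one]
  refine Finset.card_nsmul_le_sum T _ 1 fun k hk => ?_
  rw [← Real.exp_add, Real.one_le_exp_iff]
  linarith [mul_le_mul_of_nonneg_left (hT k hk) hl]

lemma sum_prod_le_prod_of_forall_sum_le {ι α : Type*} [Fintype ι] {f : ι → α → ℝ} {B : ι → ℝ}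
    (hf : ∀ j x, 0 ≤ f j x) (hB : ∀ j (U : Finset α), ∑ x ∈ U, f j x ≤ B j)
    (T : Finset (ι → α)) : ∑ k ∈ T, ∏ j, f j (k j) ≤ ∏ j, B j := by
  classical
  have hT : T ⊆ Fintype.piFinset fun j => T.image fun k => k j := fun k hk =>
    Fintype.mem_piFinset.mpr fun _ => Finset.mem_image_of_mem _ hk
  calc ∑ k ∈ T, ∏ j, f j (k j)
      ≤ ∑ k ∈ Fintype.piFinset fun j => T.image fun k => k j, ∏ j, f j (k j) :=
        Finset.sum_le_sum_of_subset_of_nonneg hT fun k _ _ =>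
          Finset.prod_nonneg fun j _ => hf j (k j)
    _ = ∏ j, ∑ x ∈ T.image fun k => k j, f j x := (Finset.prod_univ_sum _ _).symm
    _ ≤ ∏ j, B j :=
        Finset.prod_le_prod (fun j _ => Finset.sum_nonneg fun x _ => hf j x) fun j _ => hB j _

lemma sum_range_exp_neg_mul_succ_le {l : ℝ} (hl : 0 < l) (N : ℕ) :
    ∑ r ∈ Finset.range N, Real.exp (-l * (r + 1)) ≤ 1 / l := by
  have hlt : Real.exp (-l) < 1 := Real.exp_lt_one_iff.mpr (neg_lt_zero.mpr hl)
  calc ∑ r ∈ Finset.range N, Real.exp (-l * (r + 1))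
      = ∑ i ∈ Finset.Ico 1 (N + 1), Real.exp (-l) ^ i := by
        rw [Finset.sum_Ico_eq_sum_range, Nat.add_sub_cancel]
        refine Finset.sum_congr rfl fun r _ => ?_
        rw [← Real.exp_nat_mul]
        push_cast
        ring_nf
    _ ≤ Real.exp (-l) ^ 1 / (1 - Real.exp (-l)) :=
        geom_sum_Ico_le_of_lt_one (Real.exp_pos _).le hlt
    _ = 1 / (Real.exp l - 1) := by
        rw [Real.exp_neg]
        field_simp
    _ ≤ 1 / l := one_div_le_one_div_of_le hl (by linarith [Real.add_one_le_exp l])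

lemma exists_pos_mul_add_div_eq_two_mul_sqrt {C M : ℝ} (hC : 0 < C) (hM : 0 < M) :
    ∃ l > 0, l * M + C / l = 2 * √(C * M) := by
  refine ⟨√C / √M, by positivity, ?_⟩
  rw [Real.sqrt_mul hC.le]
  field_simp
  rw [Real.sq_sqrt hC.le, Real.sq_sqrt hM.le]
  ring

lemma le_two_mul_sqrt_of_forall_pos_le {x C M : ℝ} (hC : 0 ≤ C) (hM : 0 ≤ M)
    (h : ∀ l > 0, x ≤ l * M + C / l) : x ≤ 2 * √(C * M) := by
  -- The infimum is not attained when exactly one of `C`, `M` vanishes, so both are perturbed.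
  have hlim : Tendsto (fun ε : ℝ => 2 * √((C + ε) * (M + ε))) (𝓝[>] 0) (𝓝 (2 * √(C * M))) := by
    have hcont : Continuous fun ε : ℝ => 2 * √((C + ε) * (M + ε)) := by fun_prop
    simpa using (hcont.tendsto 0).mono_left nhdsWithin_le_nhds
  refine ge_of_tendsto hlim ?_
  filter_upwards [self_mem_nhdsWithin] with ε (hε : 0 < ε)
  obtain ⟨l, hl, heq⟩ := exists_pos_mul_add_div_eq_two_mul_sqrt
    (add_pos_of_nonneg_of_pos hC hε) (add_pos_of_nonneg_of_pos hM hε)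
  calc x ≤ l * M + C / l := h l hl
    _ ≤ l * (M + ε) + (C + ε) / l := by gcongr <;> linarith
    _ = 2 * √((C + ε) * (M + ε)) := heq

lemma natDigit_eq_zero_of_lt_pow {b k i : ℕ} (hk : k < b ^ i) : natDigit b k i = 0 := by
  rw [natDigit, Nat.div_eq_of_lt hk, Nat.zero_mod]

lemma sum_prod_natDigit {R : Type*} [CommSemiring R] (b N : ℕ) (g : ℕ → ℕ → R) :
    ∑ k ∈ Finset.range (b ^ N), ∏ i ∈ Finset.range N, g i (natDigit b k i) =
      ∏ i ∈ Finset.range N, ∑ d ∈ Finset.range b, g i d := by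
  simp only [Finset.sum_range, Finset.prod_range]
  rw [Fintype.prod_sum]
  exact finFunctionFinEquiv.symm.sum_comp fun d : Fin N → Fin b => ∏ i : Fin N, g i (d i)

section DickWeight

/-- The contribution `max (i + 1 + a) 1` of a nonzero digit at the place `b ^ i` to the modified
Dick weight `μ'_a`; places are indexed from `0` here and from `1` in the paper. -/
def placeWt (a : ℝ) (i : ℕ) : ℝ := max ((i : ℝ) + 1 + a) 1

lemma negCount_eq_floor (a : ℝ) : negCount a = ⌊1 - a⌋₊ := by
  have hset : {i : ℕ | 0 < i ∧ (i : ℝ) + a ≤ 1} = Finset.Icc 1 ⌊1 - a⌋₊ := by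
    ext i
    simp only [Set.mem_ofPred_eq, Finset.coe_Icc, Set.mem_Icc, Nat.succ_le_iff]
    refine and_congr_right fun hi => ?_
    rw [Nat.le_floor_iff' hi.ne', le_sub_iff_add_le]
  rw [negCount, hset, Set.ncard_coe_finset, Nat.card_Icc, Nat.add_sub_cancel]

lemma negCount_add_pos (a : ℝ) : 0 < (negCount a : ℝ) + a := by
  rw [negCount_eq_floor]
  linarith [Nat.lt_floor_add_one (1 - a)]

lemma succ_le_placeWt_negCount_add (a : ℝ) (r : ℕ) : (r : ℝ) + 1 ≤ placeWt a (negCount a + r) := by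
  refine le_trans ?_ (le_max_left _ _)
  push_cast
  linarith [negCount_add_pos a]

lemma sum_range_exp_neg_mul_placeWt_le (a : ℝ) {l : ℝ} (hl : 0 < l) (N : ℕ) :
    ∑ i ∈ Finset.range N, Real.exp (-l * placeWt a i) ≤ negCount a + 1 / l := by
  set n := negCount a
  have hfirst : ∀ i ∈ Finset.range n, Real.exp (-l * placeWt a i) ≤ 1 := fun i _ => by
    have hw : 0 ≤ placeWt a i := zero_le_one.trans (le_max_right _ _)
    rw [Real.exp_le_one_iff]
    linarith [mul_nonneg hl.le hw]
  have hrest : ∀ r ∈ Finset.range N,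
      Real.exp (-l * placeWt a (n + r)) ≤ Real.exp (-l * (r + 1)) := fun r _ =>
    Real.exp_le_exp.mpr <|
      mul_le_mul_of_nonpos_left (succ_le_placeWt_negCount_add a r) (neg_nonpos.mpr hl.le)
  calc ∑ i ∈ Finset.range N, Real.exp (-l * placeWt a i)
      ≤ ∑ i ∈ Finset.range (n + N), Real.exp (-l * placeWt a i) :=
        Finset.sum_le_sum_of_subset_of_nonneg (Finset.range_mono (Nat.le_add_left N n))
          fun i _ _ => (Real.exp_pos _).le
    _ = ∑ i ∈ Finset.range n, Real.exp (-l * placeWt a i) +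
          ∑ r ∈ Finset.range N, Real.exp (-l * placeWt a (n + r)) := Finset.sum_range_add _ _ _
    _ ≤ ∑ i ∈ Finset.range n, 1 + ∑ r ∈ Finset.range N, Real.exp (-l * (r + 1)) :=
        add_le_add (Finset.sum_le_sum hfirst) (Finset.sum_le_sum hrest)
    _ ≤ n + 1 / l := by simpa using sum_range_exp_neg_mul_succ_le hl N

variable {b : ℕ}

lemma mdickWt_eq_sum_range (hb : 2 ≤ b) (a : ℝ) {k N : ℕ} (hk : k < b ^ N) :
    mdickWt b a k = ∑ i ∈ Finset.range N, if natDigit b k i ≠ 0 then placeWt a i else 0 := by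
  refine Finset.sum_congr_of_eq_on_inter (fun i _ hi => ?_) (fun i _ hi => ?_) fun _ _ _ => rfl
  · have hNi : N ≤ i := by simpa using hi
    have hki : k < b ^ i := hk.trans_le (Nat.pow_le_pow_right (by lia) hNi)
    simp [natDigit_eq_zero_of_lt_pow hki]
  · have hki : k ≤ i := by simpa using hi
    have hki' : k < b ^ i := hki.trans_lt (Nat.lt_pow_self hb)
    simp [natDigit_eq_zero_of_lt_pow hki']

lemma sum_range_pow_exp_neg_mul_mdickWt (hb : 2 ≤ b) (a l : ℝ) (N : ℕ) :
    ∑ k ∈ Finset.range (b ^ N), Real.exp (-l * mdickWt b a k) =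
      ∏ i ∈ Finset.range N, (1 + ((b : ℝ) - 1) * Real.exp (-l * placeWt a i)) := by
  have hfactor : ∀ k ∈ Finset.range (b ^ N), Real.exp (-l * mdickWt b a k) =
      ∏ i ∈ Finset.range N, if natDigit b k i ≠ 0 then Real.exp (-l * placeWt a i) else 1 := by
    intro k hk
    rw [mdickWt_eq_sum_range hb a (Finset.mem_range.mp hk), Finset.mul_sum, Real.exp_sum]
    refine Finset.prod_congr rfl fun i _ => ?_
    split_ifs <;> simp
  rw [Finset.sum_congr rfl hfactor,
    sum_prod_natDigit b N fun i d => if d ≠ 0 then Real.exp (-l * placeWt a i) else 1]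
  refine Finset.prod_congr rfl fun i _ => ?_
  obtain ⟨c, rfl⟩ : ∃ c, b = c + 1 := ⟨b - 1, by lia⟩
  simp [Finset.sum_range_succ', add_comm]

lemma sum_exp_neg_mul_mdickWt_le (hb : 2 ≤ b) (a : ℝ) {l : ℝ} (hl : 0 < l) (U : Finset ℕ) :
    ∑ k ∈ U, Real.exp (-l * mdickWt b a k) ≤ Real.exp (((b : ℝ) - 1) * (negCount a + 1 / l)) := by
  have hb1 : (0 : ℝ) ≤ (b : ℝ) - 1 := sub_nonneg.mpr (by exact_mod_cast one_le_two.trans hb)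
  set N := U.sup id
  have hU : U ⊆ Finset.range (b ^ N) := fun k hk =>
    Finset.mem_range.mpr ((Finset.le_sup (f := id) hk).trans_lt (Nat.lt_pow_self hb))
  calc ∑ k ∈ U, Real.exp (-l * mdickWt b a k)
      ≤ ∑ k ∈ Finset.range (b ^ N), Real.exp (-l * mdickWt b a k) :=
        Finset.sum_le_sum_of_subset_of_nonneg hU fun k _ _ => (Real.exp_pos _).le
    _ = ∏ i ∈ Finset.range N, (1 + ((b : ℝ) - 1) * Real.exp (-l * placeWt a i)) :=
        sum_range_pow_exp_neg_mul_mdickWt hb a l N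
    _ ≤ Real.exp (∑ i ∈ Finset.range N, ((b : ℝ) - 1) * Real.exp (-l * placeWt a i)) :=
        Real.prod_one_add_le_exp_sum _ fun i => mul_nonneg hb1 (Real.exp_pos _).le
    _ ≤ Real.exp (((b : ℝ) - 1) * (negCount a + 1 / l)) := by
        rw [← Finset.mul_sum]
        gcongr
        exact sum_range_exp_neg_mul_placeWt_le a hl N

lemma sum_exp_neg_mul_mdickWtV_le (hb : 2 ≤ b) {s : ℕ} (a : Fin s → ℝ) {l : ℝ} (hl : 0 < l)
    (T : Finset (Fin s → ℕ)) :
    ∑ k ∈ T, Real.exp (-l * mdickWtV b a k) ≤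
      Real.exp (((b : ℝ) - 1) * ∑ j, (negCount (a j) : ℝ) + ((b : ℝ) - 1) * s / l) := by
  calc ∑ k ∈ T, Real.exp (-l * mdickWtV b a k)
      = ∑ k ∈ T, ∏ j, Real.exp (-l * mdickWt b (a j) (k j)) := by
        simp only [mdickWtV, Finset.mul_sum, Real.exp_sum]
    _ ≤ ∏ j, Real.exp (((b : ℝ) - 1) * (negCount (a j) + 1 / l)) :=
        sum_prod_le_prod_of_forall_sum_le (fun _ _ => (Real.exp_pos _).le)
          (fun j U => sum_exp_neg_mul_mdickWt_le hb (a j) hl U) T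
    _ = Real.exp (((b : ℝ) - 1) * ∑ j, (negCount (a j) : ℝ) + ((b : ℝ) - 1) * s / l) := by
        rw [← Real.exp_sum, ← Finset.mul_sum, Finset.sum_add_distrib, Finset.sum_const,
          Finset.card_univ, Fintype.card_fin, nsmul_eq_mul]
        ring_nf

lemma card_le_exp_of_forall_mdickWtV_le (hb : 2 ≤ b) {s : ℕ} {a : Fin s → ℝ} {M : ℝ} (hM : 0 ≤ M)
    {T : Finset (Fin s → ℕ)} (hT : ∀ k ∈ T, mdickWtV b a k ≤ M) :
    (T.card : ℝ) ≤ Real.exp (((b : ℝ) - 1) * ∑ j, (negCount (a j) : ℝ) +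
      2 * √(((b : ℝ) - 1) * s * M)) := by
  set S := ((b : ℝ) - 1) * ∑ j, (negCount (a j) : ℝ)
  rcases T.eq_empty_or_nonempty with rfl | hne
  · simpa using (Real.exp_pos _).le
  have hcard : (0 : ℝ) < T.card := by exact_mod_cast hne.card_pos
  have hb1 : (0 : ℝ) ≤ (b : ℝ) - 1 := sub_nonneg.mpr (by exact_mod_cast one_le_two.trans hb)
  have hchernoff : ∀ l > 0, Real.log T.card - S ≤ l * M + ((b : ℝ) - 1) * s / l := by
    intro l hl
    rw [sub_le_iff_le_add, Real.log_le_iff_le_exp hcard]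
    calc (T.card : ℝ) ≤ Real.exp (l * M) * ∑ k ∈ T, Real.exp (-l * mdickWtV b a k) :=
          card_le_exp_mul_sum_exp_neg hl.le hT
      _ ≤ Real.exp (l * M) * Real.exp (S + ((b : ℝ) - 1) * s / l) := by
          gcongr
          exact sum_exp_neg_mul_mdickWtV_le hb a hl T
      _ = Real.exp (l * M + ((b : ℝ) - 1) * s / l + S) := by
          rw [← Real.exp_add]
          ring_nf
  have hopt := le_two_mul_sqrt_of_forall_pos_le (by positivity) hM hchernoff
  rwa [sub_le_iff_le_add', Real.log_le_iff_le_exp hcard] at hopt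

end DickWeight

theorem statement13_general (b : ℕ) (hb : 2 ≤ b) (s : ℕ) (a : Fin s → ℝ) (M : ℝ) (hM : 0 ≤ M) :
    {k : Fin s → ℕ | mdickWtV b a k ≤ M}.Finite ∧
      (Set.ncard {k : Fin s → ℕ | mdickWtV b a k ≤ M} : ℝ) ≤
        Real.exp (((b : ℝ) - 1) * ∑ j, (negCount (a j) : ℝ) +
          2 * Real.sqrt (((b : ℝ) - 1) * s * M)) :=
  finite_and_ncard_le_of_forall_finset_card_le fun _ hT =>
    card_le_exp_of_forall_mdickWtV_le hb hM fun _ hk => hT hk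

/-- with `S = (b-1)·∑_{j=1}^s n_j`, for all `M ≥ 0` one has
`V_{s,a}(M) ≤ exp(S + 2·√((b-1)·s·M))`. -/
theorem statement13 (b : ℕ) (hb : 2 ≤ b) (s : ℕ) (hs : 0 < s)
    (a : ℕ → ℝ) (ha : Monotone a)
    (S : ℝ) (hS : S = ((b : ℝ) - 1) * ∑ j : Fin s, (negCount (a j) : ℝ))
    (M : ℝ) (hM : 0 ≤ M) :
    (Set.ncard {k : Fin s → ℕ | mdickWtV b (fun j : Fin s => a j) k ≤ M} : ℝ) ≤
      Real.exp (S + 2 * Real.sqrt (((b : ℝ) - 1) * s * M)) := by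
  rw [hS]
  exact (statement13_general b hb s (fun j => a j) M hM).2

end
end
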